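/- arXiv:math/0210152 — 3 statements merged into one kernel-verified Lean document; each statement's English description precedes it below -/
import Mathlib

section
/- Let V be a finite-dimensional real vector space, Π a bivector on V, and W ⊆ V a Poisson-Dirac subspace with induced bivector Π_W and induced map ♯_W : W* → W. Then the image of ♯_W, viewed as a subspace of V via the inclusion W ⊆ V, equals W ∩ Im ♯, and there is a direct sum decomposition Im ♯ = (W ∩ Im ♯) ⊕ ♯(W⁰). -/
/-!
Since a bivector is reflexive, `A_W = ♯⁻¹(W)` is the annihilator of `♯(W⁰)`, so dualizing
`W ∩ ♯(W⁰) = 0` gives `A_W + W⁰ = V*`. Applying `♯` to this sum decomposes `Im ♯`. Restricting it to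
`W` shows that `A_W` maps onto `W*`, and there `♯_W (ξ|_W) = ♯ ξ` by the definition of `Π_W`;
hence `Im ♯_W = ♯(A_W)`.
-/

open Module

section CommSemiring

variable {R M N : Type*} [CommSemiring R] [AddCommMonoid M] [Module R M]
  [AddCommMonoid N] [Module R N]

/-- `sharp` is the map `♯ : M* → M` induced by the bilinear form `B` on `M*`. The form enters as a
relation because `B` alone only determines a map into the bidual of `M`. -/
def IsSharp (sharp : Dual R M →ₗ[R] M) (B : Dual R M →ₗ[R] Dual R M →ₗ[R] R) : Prop :=
  ∀ ξ η, η (sharp ξ) = B ξ η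

/-- The Poisson-Dirac condition `W ∩ ♯(W⁰) = 0`, phrased through `♯` alone so that it applies to any
bilinear form on the dual, alternating or not. -/
def IsPoissonDirac (sharp : Dual R M →ₗ[R] M) (W : Submodule R M) : Prop :=
  Disjoint W (W.dualAnnihilator.map sharp)

/-- `BW` is a form on `W*` induced by `B`: it agrees with `B` on restrictions of elements of
`A_W = ♯⁻¹(W)`. -/
def IsInducedForm (sharp : Dual R M →ₗ[R] M) (B : Dual R M →ₗ[R] Dual R M →ₗ[R] R)
    (W : Submodule R M) (BW : Dual R W →ₗ[R] Dual R W →ₗ[R] R) : Prop :=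
  ∀ ξ ∈ W.comap sharp, ∀ η ∈ W.comap sharp, BW (W.dualRestrict ξ) (W.dualRestrict η) = B ξ η

lemma inf_range_sup_map_eq_range {f : M →ₗ[R] N} {P : Submodule R M} {Q : Submodule R N}
    (h : Q.comap f ⊔ P = ⊤) : (Q ⊓ LinearMap.range f) ⊔ P.map f = LinearMap.range f := by
  rw [inf_comm, ← Submodule.map_comap_eq, ← Submodule.map_sup, h, Submodule.map_top]

variable {sharp : Dual R M →ₗ[R] M} {B : Dual R M →ₗ[R] Dual R M →ₗ[R] R} {W : Submodule R M}
  {sharpW : Dual R W →ₗ[R] W} {BW : Dual R W →ₗ[R] Dual R W →ₗ[R] R}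

lemma IsInducedForm.sharp_dualRestrict [Projective R W] (hBW : IsInducedForm sharp B W BW)
    (hsharp : IsSharp sharp B) (hsharpW : IsSharp sharpW BW)
    (hsurj : (W.comap sharp).map W.dualRestrict = ⊤) {ξ : Dual R M} (hξ : ξ ∈ W.comap sharp) :
    (sharpW (W.dualRestrict ξ) : M) = sharp ξ := by
  suffices h : sharpW (W.dualRestrict ξ) = ⟨sharp ξ, hξ⟩ from congrArg Subtype.val h
  refine eval_apply_injective R (LinearMap.ext fun ζ ↦ ?_)
  obtain ⟨η, hη, rfl⟩ : ζ ∈ (W.comap sharp).map W.dualRestrict := hsurj ▸ Submodule.mem_top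
  calc W.dualRestrict η (sharpW (W.dualRestrict ξ))
    _ = BW (W.dualRestrict ξ) (W.dualRestrict η) := hsharpW _ _
    _ = B ξ η := hBW ξ hξ η hη
    _ = η (sharp ξ) := (hsharp ξ η).symm

lemma IsInducedForm.map_subtype_range_sharp [Projective R W] (hBW : IsInducedForm sharp B W BW)
    (hsharp : IsSharp sharp B) (hsharpW : IsSharp sharpW BW)
    (hsurj : (W.comap sharp).map W.dualRestrict = ⊤) :
    (LinearMap.range sharpW).map W.subtype = W ⊓ LinearMap.range sharp := by
  have h_eqOn : Set.EqOn (W.subtype ∘ₗ sharpW ∘ₗ W.dualRestrict) sharp (W.comap sharp) :=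
    fun _ hξ ↦ hBW.sharp_dualRestrict hsharp hsharpW hsurj hξ
  calc (LinearMap.range sharpW).map W.subtype
    _ = (W.comap sharp).map (W.subtype ∘ₗ sharpW ∘ₗ W.dualRestrict) := by
      rw [Submodule.map_comp, Submodule.map_comp, hsurj, Submodule.map_top]
    _ = (W.comap sharp).map sharp := SetLike.coe_injective h_eqOn.image_eq
    _ = W ⊓ LinearMap.range sharp := by rw [Submodule.map_comap_eq, inf_comm]

end CommSemiring

section Field

variable {K V : Type*} [Field K] [AddCommGroup V] [Module K V]
  {sharp : Dual K V →ₗ[K] V} {B : Dual K V →ₗ[K] Dual K V →ₗ[K] K} {W : Submodule K V}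

lemma IsSharp.comap_eq_dualAnnihilator_map (hsharp : IsSharp sharp B) (hB : B.IsRefl)
    (W : Submodule K V) : W.comap sharp = (W.dualAnnihilator.map sharp).dualAnnihilator := by
  ext ξ
  calc ξ ∈ W.comap sharp
    _ ↔ ∀ η ∈ W.dualAnnihilator, η (sharp ξ) = 0 :=
      (Subspace.forall_mem_dualAnnihilator_apply_eq_zero_iff W (sharp ξ)).symm
    _ ↔ ∀ η ∈ W.dualAnnihilator, ξ (sharp η) = 0 := by
      simp only [hsharp _ _, hB.eq_iff]
    _ ↔ ξ ∈ (W.dualAnnihilator.map sharp).dualAnnihilator := by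
      simp only [Submodule.mem_dualAnnihilator, Submodule.mem_map, forall_exists_index, and_imp,
        forall_apply_eq_imp_iff₂]

lemma IsPoissonDirac.comap_sup_dualAnnihilator_eq_top (hW : IsPoissonDirac sharp W)
    (hsharp : IsSharp sharp B) (hB : B.IsRefl) : W.comap sharp ⊔ W.dualAnnihilator = ⊤ := by
  rw [hsharp.comap_eq_dualAnnihilator_map hB, ← Subspace.dualAnnihilator_inf_eq, inf_comm,
    hW.eq_bot, Submodule.dualAnnihilator_bot]

lemma map_dualRestrict_eq_top_iff {P : Submodule K (Dual K V)} :
    P.map W.dualRestrict = ⊤ ↔ P ⊔ W.dualAnnihilator = ⊤ := by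
  rw [← W.dualRestrict_ker_eq_dualAnnihilator]
  exact LinearMap.map_eq_top_iff (LinearMap.range_eq_top.mpr Subspace.dualRestrict_surjective)

theorem poisson_dirac_image_of_induced_sharp_general (hB : B.IsRefl) (hsharp : IsSharp sharp B)
    (hW : IsPoissonDirac sharp W) {BW : Dual K W →ₗ[K] Dual K W →ₗ[K] K}
    (hBW : IsInducedForm sharp B W BW) {sharpW : Dual K W →ₗ[K] W} (hsharpW : IsSharp sharpW BW) :
    (LinearMap.range sharpW).map W.subtype = W ⊓ LinearMap.range sharp ∧
    (W ⊓ LinearMap.range sharp) ⊔ W.dualAnnihilator.map sharp = LinearMap.range sharp ∧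
    (W ⊓ LinearMap.range sharp) ⊓ W.dualAnnihilator.map sharp = ⊥ := by
  have h_top : W.comap sharp ⊔ W.dualAnnihilator = ⊤ :=
    hW.comap_sup_dualAnnihilator_eq_top hsharp hB
  exact ⟨hBW.map_subtype_range_sharp hsharp hsharpW (map_dualRestrict_eq_top_iff.mpr h_top),
    inf_range_sup_map_eq_range h_top, (Disjoint.mono_left inf_le_left hW).eq_bot⟩

end Field

/-- Let `V` be a finite-dimensional real vector space, `Π` a bivector on
`V` (with induced `♯ : V* → V`), and `W ⊆ V` a Poisson-Dirac subspace with induced bivector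
`Π_W` and induced map `♯_W : W* → W`.  Then the image of `♯_W`, viewed inside `V` via the
inclusion `W ⊆ V`, equals `W ∩ Im ♯`, and there is a direct sum decomposition
`Im ♯ = (W ∩ Im ♯) ⊕ ♯(W⁰)`. -/
theorem poisson_dirac_image_of_induced_sharp
    {V : Type*} [AddCommGroup V] [Module ℝ V] [FiniteDimensional ℝ V]
    (Pi : Dual ℝ V →ₗ[ℝ] Dual ℝ V →ₗ[ℝ] ℝ) (hPi : ∀ ξ, Pi ξ ξ = 0)
    (sharp : Dual ℝ V →ₗ[ℝ] V) (hsharp : ∀ ξ η, η (sharp ξ) = Pi ξ η)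
    (W : Submodule ℝ V)
    (hPD : W ⊓ Submodule.map sharp W.dualAnnihilator = ⊥)
    (PiW : Dual ℝ W →ₗ[ℝ] Dual ℝ W →ₗ[ℝ] ℝ)
    (hPiW : ∀ ξ ∈ Submodule.comap sharp W, ∀ η ∈ Submodule.comap sharp W,
      PiW (W.subtype.dualMap ξ) (W.subtype.dualMap η) = Pi ξ η)
    (sharpW : Dual ℝ W →ₗ[ℝ] W) (hsharpW : ∀ ζ ζ', ζ' (sharpW ζ) = PiW ζ ζ') :
    Submodule.map W.subtype (LinearMap.range sharpW) = W ⊓ LinearMap.range sharp ∧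
    (W ⊓ LinearMap.range sharp) ⊔ Submodule.map sharp W.dualAnnihilator
      = LinearMap.range sharp ∧
    (W ⊓ LinearMap.range sharp) ⊓ Submodule.map sharp W.dualAnnihilator = ⊥ := by
  exact poisson_dirac_image_of_induced_sharp_general (LinearMap.IsAlt.isRefl hPi) hsharp
    (disjoint_iff.mpr hPD) hPiW hsharpW
end

section
/- Let V be a finite-dimensional real vector space, Π a bivector on V with associated symplectic space (S, ω) where S = Im ♯, and W ⊆ V any subspace. Then the radical of the restriction of ω to W ∩ S, namely {v ∈ W ∩ S : ω(v, w) = 0 for all w ∈ W ∩ S}, equals W ∩ ♯(W⁰). In particular, W is a Poisson-Dirac subspace of (V, Π) if and only if W ∩ S is a symplectic subspace of (S, ω), i.e. the restriction of ω to W ∩ S is nondegenerate. -/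
/-!
Write `v = ♯ξ`. Since `ω (♯ξ) (♯η) = Π ξ η` vanishes together with `Π η ξ = ξ (♯η)`, the vector `v`
is `ω`-orthogonal to `W ∩ S` exactly when `ξ` annihilates `W ∩ S`. Over a field
`(W ∩ S)⁰ = W⁰ + S⁰`, and `S⁰ = ker ♯`, so `♯((W ∩ S)⁰) = ♯(W⁰)`.
-/

open Module

section RestrictionRadical

variable {R M : Type*} [CommSemiring R] [AddCommMonoid M] [Module R M] {S W : Submodule R M}

/-- The left radical `{v ∈ W ∩ S | ∀ w ∈ W ∩ S, ω v w = 0}` of the restriction to `W ∩ S` of a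
bilinear form `ω` on `S`, as a submodule of the ambient module. The form is flipped because
`Submodule.orthogonalBilin` takes the orthogonal with respect to the second argument. -/
def restrictionRadical (ω : S →ₗ[R] S →ₗ[R] R) (W : Submodule R M) : Submodule R M :=
  (W.submoduleOf S ⊓ (W.submoduleOf S).orthogonalBilin ω.flip).map S.subtype

theorem mem_restrictionRadical {ω : S →ₗ[R] S →ₗ[R] R} {v : M} :
    v ∈ restrictionRadical ω W ↔
      v ∈ W ∧ ∃ hv : v ∈ S, ∀ w : M, w ∈ W → ∀ hw : w ∈ S, ω ⟨v, hv⟩ ⟨w, hw⟩ = 0 := by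
  constructor
  · rintro ⟨⟨v, hvS⟩, ⟨hvW, hvω⟩, rfl⟩
    exact ⟨hvW, hvS, fun w hwW hwS ↦ hvω ⟨w, hwS⟩ hwW⟩
  · rintro ⟨hvW, hvS, hvω⟩
    exact ⟨⟨v, hvS⟩, ⟨hvW, fun w hwW ↦ hvω w hwW w.2⟩, rfl⟩

theorem restrictionRadical_eq_bot_iff {ω : S →ₗ[R] S →ₗ[R] R} :
    restrictionRadical ω W = ⊥ ↔
      ∀ v : M, v ∈ W → ∀ hv : v ∈ S,
        (∀ w : M, w ∈ W → ∀ hw : w ∈ S, ω ⟨v, hv⟩ ⟨w, hw⟩ = 0) → v = 0 := by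
  simp only [Submodule.eq_bot_iff, mem_restrictionRadical, and_imp, forall_exists_index]

end RestrictionRadical

section Sharp

variable {R M : Type*} [CommSemiring R] [AddCommMonoid M] [Module R M]
  {Pi : Dual R M →ₗ[R] Dual R M →ₗ[R] R} {sharp : Dual R M →ₗ[R] M}
  {ω : LinearMap.range sharp →ₗ[R] LinearMap.range sharp →ₗ[R] R}

theorem sharp_mem_restrictionRadical_iff (hPi : Pi.IsRefl)
    (hsharp : ∀ ξ η, η (sharp ξ) = Pi ξ η)
    (hω : ∀ ξ η, ω (sharp.rangeRestrict ξ) (sharp.rangeRestrict η) = Pi ξ η)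
    {W : Submodule R M} {ξ : Dual R M} :
    sharp ξ ∈ restrictionRadical ω W ↔
      sharp ξ ∈ W ∧ ξ ∈ (W ⊓ LinearMap.range sharp).dualAnnihilator := by
  have orthogonal_iff (η : Dual R M) :
      ω (sharp.rangeRestrict ξ) (sharp.rangeRestrict η) = 0 ↔ ξ (sharp η) = 0 := by
    rw [hω, hsharp, hPi.eq_iff]
  rw [mem_restrictionRadical, Submodule.mem_dualAnnihilator]
  refine and_congr_right fun _ ↦ ⟨?_, fun hξ ↦ ⟨⟨ξ, rfl⟩, ?_⟩⟩
  · rintro ⟨_, hξ⟩ _ ⟨hηW, η, rfl⟩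
    exact (orthogonal_iff η).mp (hξ _ hηW ⟨η, rfl⟩)
  · rintro _ hηW ⟨η, rfl⟩
    exact (orthogonal_iff η).mpr (hξ _ ⟨hηW, η, rfl⟩)

theorem restrictionRadical_eq_inf_map_dualAnnihilator (hPi : Pi.IsRefl)
    (hsharp : ∀ ξ η, η (sharp ξ) = Pi ξ η)
    (hω : ∀ ξ η, ω (sharp.rangeRestrict ξ) (sharp.rangeRestrict η) = Pi ξ η)
    (W : Submodule R M) :
    restrictionRadical ω W = W ⊓ (W ⊓ LinearMap.range sharp).dualAnnihilator.map sharp := by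
  have mem_iff {ξ : Dual R M} := sharp_mem_restrictionRadical_iff hPi hsharp hω (W := W) (ξ := ξ)
  apply le_antisymm
  · intro v hv
    obtain ⟨-, ⟨ξ, rfl⟩, -⟩ := mem_restrictionRadical.mp hv
    obtain ⟨hξW, hξ⟩ := mem_iff.mp hv
    exact ⟨hξW, ξ, hξ, rfl⟩
  · rintro _ ⟨hξW, ξ, hξ, rfl⟩
    exact mem_iff.mpr ⟨hξW, hξ⟩

theorem dualAnnihilator_range_sharp_eq_ker [Projective R M] (hPi : Pi.IsRefl)
    (hsharp : ∀ ξ η, η (sharp ξ) = Pi ξ η) :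
    (LinearMap.range sharp).dualAnnihilator = LinearMap.ker sharp := by
  ext ξ
  calc ξ ∈ (LinearMap.range sharp).dualAnnihilator
    _ ↔ ∀ η, ξ (sharp η) = 0 := by
      simp only [Submodule.mem_dualAnnihilator, LinearMap.mem_range, forall_exists_index,
        forall_apply_eq_imp_iff]
    _ ↔ ∀ η : Dual R M, η (sharp ξ) = 0 := forall_congr' fun η ↦ by
      rw [hsharp, hsharp, hPi.eq_iff]
    _ ↔ ξ ∈ LinearMap.ker sharp := by
      rw [forall_dual_apply_eq_zero_iff R, LinearMap.mem_ker]

end Sharp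

section Field

variable {K V : Type*} [Field K] [AddCommGroup V] [Module K V]

theorem map_sharp_dualAnnihilator_inf_range {Pi : Dual K V →ₗ[K] Dual K V →ₗ[K] K}
    {sharp : Dual K V →ₗ[K] V} (hPi : Pi.IsRefl) (hsharp : ∀ ξ η, η (sharp ξ) = Pi ξ η)
    (W : Submodule K V) :
    (W ⊓ LinearMap.range sharp).dualAnnihilator.map sharp = W.dualAnnihilator.map sharp := by
  have map_ker : (LinearMap.ker sharp).map sharp = ⊥ := LinearMap.le_ker_iff_map.mp le_rfl
  rw [Subspace.dualAnnihilator_inf_eq, dualAnnihilator_range_sharp_eq_ker hPi hsharp,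
    Submodule.map_sup, map_ker, sup_bot_eq]

theorem poisson_dirac_iff_symplectic_intersection_general
    (Pi : Dual K V →ₗ[K] Dual K V →ₗ[K] K) (hPi : Pi.IsRefl)
    (sharp : Dual K V →ₗ[K] V) (hsharp : ∀ ξ η, η (sharp ξ) = Pi ξ η)
    (ω : ↥(LinearMap.range sharp) →ₗ[K] ↥(LinearMap.range sharp) →ₗ[K] K)
    (hω : ∀ ξ η : Dual K V,
      ω ⟨sharp ξ, LinearMap.mem_range_self sharp ξ⟩
        ⟨sharp η, LinearMap.mem_range_self sharp η⟩ = Pi ξ η)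
    (W : Submodule K V) :
    (∀ v : V,
      (v ∈ W ∧ ∃ hv : v ∈ LinearMap.range sharp,
        ∀ w : V, w ∈ W → ∀ hw : w ∈ LinearMap.range sharp, ω ⟨v, hv⟩ ⟨w, hw⟩ = 0) ↔
      v ∈ W ⊓ Submodule.map sharp W.dualAnnihilator) ∧
    (W ⊓ Submodule.map sharp W.dualAnnihilator = ⊥ ↔
      ∀ v : V, v ∈ W → ∀ hv : v ∈ LinearMap.range sharp,
        (∀ w : V, w ∈ W → ∀ hw : w ∈ LinearMap.range sharp, ω ⟨v, hv⟩ ⟨w, hw⟩ = 0) →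
        v = 0) := by
  have radical_eq : restrictionRadical ω W = W ⊓ W.dualAnnihilator.map sharp := by
    rw [restrictionRadical_eq_inf_map_dualAnnihilator hPi hsharp hω,
      map_sharp_dualAnnihilator_inf_range hPi hsharp]
  rw [← radical_eq]
  exact ⟨fun _ ↦ mem_restrictionRadical.symm, restrictionRadical_eq_bot_iff⟩

end Field

/-- Let `V` be a finite-dimensional real vector space, `Π` a bivector on
`V` with associated symplectic space `(S, ω)`, `S = Im ♯`, `ω (♯ξ) (♯η) = Π ξ η`, and let
`W ⊆ V` be any subspace.  Then the radical of the restriction of `ω` to `W ∩ S`, namely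
`{v ∈ W ∩ S : ω v w = 0 for all w ∈ W ∩ S}`, equals `W ∩ ♯(W⁰)`.  In particular, `W` is a
Poisson-Dirac subspace of `(V, Π)` iff `W ∩ S` is a symplectic subspace of `(S, ω)`, i.e.
the restriction of `ω` to `W ∩ S` is nondegenerate. -/
theorem poisson_dirac_iff_symplectic_intersection
    {V : Type*} [AddCommGroup V] [Module ℝ V] [FiniteDimensional ℝ V]
    (Pi : Dual ℝ V →ₗ[ℝ] Dual ℝ V →ₗ[ℝ] ℝ) (hPi : ∀ ξ, Pi ξ ξ = 0)
    (sharp : Dual ℝ V →ₗ[ℝ] V) (hsharp : ∀ ξ η, η (sharp ξ) = Pi ξ η)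
    (ω : ↥(LinearMap.range sharp) →ₗ[ℝ] ↥(LinearMap.range sharp) →ₗ[ℝ] ℝ)
    (hω : ∀ ξ η : Dual ℝ V,
      ω ⟨sharp ξ, LinearMap.mem_range_self sharp ξ⟩
        ⟨sharp η, LinearMap.mem_range_self sharp η⟩ = Pi ξ η)
    (W : Submodule ℝ V) :
    (∀ v : V,
      (v ∈ W ∧ ∃ hv : v ∈ LinearMap.range sharp,
        ∀ w : V, w ∈ W → ∀ hw : w ∈ LinearMap.range sharp, ω ⟨v, hv⟩ ⟨w, hw⟩ = 0) ↔
      v ∈ W ⊓ Submodule.map sharp W.dualAnnihilator) ∧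
    (W ⊓ Submodule.map sharp W.dualAnnihilator = ⊥ ↔
      ∀ v : V, v ∈ W → ∀ hv : v ∈ LinearMap.range sharp,
        (∀ w : V, w ∈ W → ∀ hw : w ∈ LinearMap.range sharp, ω ⟨v, hv⟩ ⟨w, hw⟩ = 0) →
        v = 0) :=
  poisson_dirac_iff_symplectic_intersection_general Pi (LinearMap.IsAlt.isRefl hPi) sharp hsharp
    ω hω W
end

section
/- Let V be a finite-dimensional real vector space and Π a bivector on V. Define the bilinear form ω_Π on V ⊕ V* by ω_Π((v₁, ξ₁), (v₂, ξ₂)) = ξ₁(v₂) − ξ₂(v₁) + Π(ξ₁, ξ₂). Then ω_Π is alternating and nondegenerate (a linear symplectic form on V ⊕ V*). Moreover, if W ⊆ V is a Poisson-Dirac subspace, then for (v₁, ξ₁) ∈ W ⊕ A_W one has ω_Π((v₁, ξ₁), (v₂, ξ₂)) = 0 for all v₂ ∈ W and all ξ₂ ∈ A_W if and only if v₁ = 0 and ξ₁ ∈ W⁰ ∩ ker ♯; that is, the radical of the restriction of ω_Π to W ⊕ A_W equals {0} ⊕ (W⁰ ∩ ker ♯). -/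
open Module

/-! For subspaces `U` of `V` and `Ξ` of `V*`, skewness of `♯` gives
`ω_Π (w, η) (v, ξ) = η (v - ♯ξ) - ξ w`, so `(v, ξ)` is orthogonal to `U ⊕ Ξ` iff `ξ ∈ U⁰` and
`v - ♯ξ` is killed by `Ξ`. Skewness also gives `A_W = (♯W⁰)⁰`, so the double annihilator theorem
yields `(W ⊕ A_W)^⊥ = ♯W⁰ ⊕ W⁰` for every subspace `W`. Intersecting with `W ⊕ A_W` leaves
`(W ∩ ♯W⁰) ⊕ (W⁰ ∩ A_W)`. The Poisson-Dirac condition makes the first summand zero, and it also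
forces `♯ξ = 0` for `ξ ∈ W⁰ ∩ A_W`, since then `♯ξ ∈ W ∩ ♯W⁰`. -/

lemma inf_comap_eq_inf_ker_of_disjoint_map {R M N : Type*} [Semiring R] [AddCommMonoid M]
    [Module R M] [AddCommMonoid N] [Module R N] {f : M →ₗ[R] N} {p : Submodule R M}
    {q : Submodule R N} (h : Disjoint q (p.map f)) : p ⊓ q.comap f = p ⊓ LinearMap.ker f := by
  refine le_antisymm (fun x ⟨hxp, hxq⟩ ↦ ⟨hxp, ?_⟩) (inf_le_inf_left p (LinearMap.ker_le_comap f))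
  exact Submodule.disjoint_def.mp h (f x) hxq (Submodule.mem_map_of_mem hxp)

section CommRing

variable {R M : Type*} [CommRing R] [AddCommGroup M] [Module R M]

/-- The form `ω_Π` on `M ⊕ M*` attached to a bilinear form `Π` on `M*`: the canonical skew pairing
of `M` with `M*`, twisted by `Π`. -/
def twistedCanonicalForm (Pi : LinearMap.BilinForm R (Dual R M)) :
    LinearMap.BilinForm R (M × Dual R M) :=
  let pairing : LinearMap.BilinForm R (M × Dual R M) :=
    LinearMap.id.compl₁₂ (LinearMap.snd R M (Dual R M)) (LinearMap.fst R M (Dual R M))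
  pairing - pairing.flip +
    Pi.compl₁₂ (LinearMap.snd R M (Dual R M)) (LinearMap.snd R M (Dual R M))

variable {Pi : LinearMap.BilinForm R (Dual R M)} {sharp : Dual R M →ₗ[R] M}

lemma twistedCanonicalForm_apply (p q : M × Dual R M) :
    twistedCanonicalForm Pi p q = p.2 q.1 - q.2 p.1 + Pi p.2 q.2 :=
  rfl

lemma twistedCanonicalForm_isAlt (hPi : Pi.IsAlt) : (twistedCanonicalForm Pi).IsAlt := fun p ↦ by
  rw [twistedCanonicalForm_apply, sub_self, zero_add, hPi.self_eq_zero]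

lemma twistedCanonicalForm_separatingLeft [Projective R M] :
    (twistedCanonicalForm Pi).SeparatingLeft := by
  rintro ⟨v, ξ⟩ h
  obtain rfl : ξ = 0 := by
    ext w
    simpa [twistedCanonicalForm_apply] using h (w, 0)
  obtain rfl : v = 0 := by
    refine (forall_dual_apply_eq_zero_iff R v).mp fun η ↦ ?_
    simpa [twistedCanonicalForm_apply] using h (0, η)
  rfl

lemma apply_sharp_eq_neg_apply_sharp (hPi : Pi.IsAlt) (hsharp : ∀ ξ η, η (sharp ξ) = Pi ξ η)
    (ξ η : Dual R M) : η (sharp ξ) = -ξ (sharp η) := by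
  rw [hsharp, hsharp, hPi.neg_eq]

lemma twistedCanonicalForm_apply_eq_apply_sub_sharp (hPi : Pi.IsAlt)
    (hsharp : ∀ ξ η, η (sharp ξ) = Pi ξ η) (p q : M × Dual R M) :
    twistedCanonicalForm Pi p q = p.2 (q.1 - sharp q.2) - q.2 p.1 := by
  rw [twistedCanonicalForm_apply, map_sub, apply_sharp_eq_neg_apply_sharp hPi hsharp, hsharp]
  ring

lemma mem_twistedCanonicalForm_orthogonal_prod_iff (hPi : Pi.IsAlt)
    (hsharp : ∀ ξ η, η (sharp ξ) = Pi ξ η)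
    (U : Submodule R M) (Ξ : Submodule R (Dual R M)) (v : M) (ξ : Dual R M) :
    (v, ξ) ∈ (twistedCanonicalForm Pi).orthogonal (U.prod Ξ) ↔
      v - sharp ξ ∈ Ξ.dualCoannihilator ∧ ξ ∈ U.dualAnnihilator := by
  simp only [LinearMap.BilinForm.mem_orthogonal_iff, Submodule.mem_dualCoannihilator,
    Submodule.mem_dualAnnihilator, twistedCanonicalForm_apply_eq_apply_sub_sharp hPi hsharp]
  constructor
  · intro h
    exact ⟨fun η hη ↦ by simpa using h (0, η) ⟨U.zero_mem, hη⟩,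
      fun w hw ↦ by simpa using h (w, 0) ⟨hw, Ξ.zero_mem⟩⟩
  · rintro ⟨hv, hξ⟩ ⟨w, η⟩ ⟨hw, hη⟩
    rw [hv η hη, hξ w hw, sub_zero]

end CommRing

section Field

variable {K V : Type*} [Field K] [AddCommGroup V] [Module K V]
  {Pi : LinearMap.BilinForm K (Dual K V)} {sharp : Dual K V →ₗ[K] V}

lemma comap_sharp_eq_dualAnnihilator_map_sharp (hPi : Pi.IsAlt)
    (hsharp : ∀ ξ η, η (sharp ξ) = Pi ξ η) (W : Submodule K V) :
    W.comap sharp = (W.dualAnnihilator.map sharp).dualAnnihilator := by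
  ext ξ
  rw [Submodule.mem_comap, ← Subspace.forall_mem_dualAnnihilator_apply_eq_zero_iff W]
  simp only [apply_sharp_eq_neg_apply_sharp hPi hsharp ξ, neg_eq_zero,
    Submodule.mem_dualAnnihilator _, Submodule.mem_map, forall_exists_index, and_imp,
    forall_apply_eq_imp_iff₂]

lemma twistedCanonicalForm_orthogonal_prod_comap_sharp (hPi : Pi.IsAlt)
    (hsharp : ∀ ξ η, η (sharp ξ) = Pi ξ η) (W : Submodule K V) :
    (twistedCanonicalForm Pi).orthogonal (W.prod (W.comap sharp)) =
      (W.dualAnnihilator.map sharp).prod W.dualAnnihilator := by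
  ext ⟨v, ξ⟩
  rw [mem_twistedCanonicalForm_orthogonal_prod_iff hPi hsharp,
    comap_sharp_eq_dualAnnihilator_map_sharp hPi hsharp,
    Subspace.dualAnnihilator_dualCoannihilator_eq, Submodule.mem_prod]
  exact and_congr_left fun hξ ↦ Submodule.sub_mem_iff_left _ (Submodule.mem_map_of_mem hξ)

lemma prod_comap_sharp_inf_twistedCanonicalForm_orthogonal (hPi : Pi.IsAlt)
    (hsharp : ∀ ξ η, η (sharp ξ) = Pi ξ η)
    {W : Submodule K V} (hPD : Disjoint W (W.dualAnnihilator.map sharp)) :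
    W.prod (W.comap sharp) ⊓ (twistedCanonicalForm Pi).orthogonal (W.prod (W.comap sharp)) =
      (⊥ : Submodule K V).prod (W.dualAnnihilator ⊓ LinearMap.ker sharp) := by
  rw [twistedCanonicalForm_orthogonal_prod_comap_sharp hPi hsharp, Submodule.prod_inf_prod,
    hPD.eq_bot, inf_comm (W.comap sharp), inf_comap_eq_inf_ker_of_disjoint_map hPD]

theorem canonical_symplectic_form_on_sum_and_presymplectic_radical_general
    (hPi : Pi.IsAlt) (hsharp : ∀ ξ η, η (sharp ξ) = Pi ξ η)
    {W : Submodule K V} (hPD : W ⊓ W.dualAnnihilator.map sharp = ⊥)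
    {ω : (V × Dual K V) → (V × Dual K V) → K}
    (hωdef : ∀ p q : V × Dual K V, ω p q = p.2 q.1 - q.2 p.1 + Pi p.2 q.2) :
    (∀ p, ω p p = 0) ∧
    (∀ p, (∀ q, ω p q = 0) → p = 0) ∧
    (∀ v₁ ∈ W, ∀ ξ₁ ∈ W.comap sharp,
      ((∀ v₂ ∈ W, ∀ ξ₂ ∈ W.comap sharp, ω (v₁, ξ₁) (v₂, ξ₂) = 0) ↔
        (v₁ = 0 ∧ ξ₁ ∈ W.dualAnnihilator ⊓ LinearMap.ker sharp))) := by
  obtain rfl : ω = fun p q ↦ twistedCanonicalForm Pi p q := funext₂ hωdef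
  have hAlt : (twistedCanonicalForm Pi).IsAlt := twistedCanonicalForm_isAlt hPi
  refine ⟨hAlt, twistedCanonicalForm_separatingLeft, fun v₁ hv₁ ξ₁ hξ₁ ↦ ?_⟩
  have horth : (v₁, ξ₁) ∈ (twistedCanonicalForm Pi).orthogonal (W.prod (W.comap sharp)) ↔
      ∀ v₂ ∈ W, ∀ ξ₂ ∈ W.comap sharp, twistedCanonicalForm Pi (v₁, ξ₁) (v₂, ξ₂) = 0 :=
    ⟨fun h v₂ hv₂ ξ₂ hξ₂ ↦ hAlt.isRefl _ _ (h (v₂, ξ₂) ⟨hv₂, hξ₂⟩),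
      fun h q hq ↦ hAlt.isRefl _ _ (h q.1 hq.1 q.2 hq.2)⟩
  have hmem : (v₁, ξ₁) ∈ W.prod (W.comap sharp) := ⟨hv₁, hξ₁⟩
  rw [← horth, ← Submodule.mem_bot K (x := v₁), ← Submodule.mem_prod (x := (v₁, ξ₁)),
    ← prod_comap_sharp_inf_twistedCanonicalForm_orthogonal hPi hsharp
      (disjoint_iff.mpr hPD), Submodule.mem_inf, and_iff_right hmem]

end Field

/-- Let `V` be a finite-dimensional real vector space and `Π` a bivector
on `V` (with induced `♯ : V* → V`).  Define the bilinear form `ω_Π` on `V ⊕ V*` by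
`ω_Π (v₁,ξ₁) (v₂,ξ₂) = ξ₁ v₂ − ξ₂ v₁ + Π ξ₁ ξ₂`.  Then `ω_Π` is alternating and
nondegenerate (a linear symplectic form on `V ⊕ V*`).  Moreover, if `W ⊆ V` is a
Poisson-Dirac subspace, then for `(v₁, ξ₁) ∈ W ⊕ A_W` one has `ω_Π (v₁,ξ₁) (v₂,ξ₂) = 0`
for all `v₂ ∈ W` and all `ξ₂ ∈ A_W` iff `v₁ = 0` and `ξ₁ ∈ W⁰ ∩ ker ♯`; that is, the
radical of the restriction of `ω_Π` to `W ⊕ A_W` is `{0} ⊕ (W⁰ ∩ ker ♯)`. -/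
theorem canonical_symplectic_form_on_sum_and_presymplectic_radical
    {V : Type*} [AddCommGroup V] [Module ℝ V] [FiniteDimensional ℝ V]
    (Pi : Dual ℝ V →ₗ[ℝ] Dual ℝ V →ₗ[ℝ] ℝ) (hPi : ∀ ξ, Pi ξ ξ = 0)
    (sharp : Dual ℝ V →ₗ[ℝ] V) (hsharp : ∀ ξ η, η (sharp ξ) = Pi ξ η)
    (W : Submodule ℝ V)
    (hPD : W ⊓ Submodule.map sharp W.dualAnnihilator = ⊥)
    (ω : (V × Dual ℝ V) → (V × Dual ℝ V) → ℝ)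
    (hωdef : ∀ p q : V × Dual ℝ V, ω p q = p.2 q.1 - q.2 p.1 + Pi p.2 q.2) :
    (∀ p, ω p p = 0) ∧
    (∀ p, (∀ q, ω p q = 0) → p = 0) ∧
    (∀ v₁ ∈ W, ∀ ξ₁ ∈ Submodule.comap sharp W,
      ((∀ v₂ ∈ W, ∀ ξ₂ ∈ Submodule.comap sharp W, ω (v₁, ξ₁) (v₂, ξ₂) = 0) ↔
        (v₁ = 0 ∧ ξ₁ ∈ W.dualAnnihilator ⊓ LinearMap.ker sharp))) := by
  exact canonical_symplectic_form_on_sum_and_presymplectic_radical_general hPi hsharp hPD hωdef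
end
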